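/- Let T : ℍⁿ ⇉ V₁ be a maximal H-monotone set-valued map with dom(T) = ℍⁿ. Then T is both locally bounded and upper semicontinuous. -/

import Mathlib

open scoped RealInnerProductSpace Pointwise

noncomputable section

abbrev E (n : ℕ) := EuclideanSpace ℝ (Fin n)
abbrev Heis (n : ℕ) := E n × E n × ℝ
abbrev V1 (n : ℕ) := WithLp 2 (E n × E n)

/-- The projection ξ₁(x,y,t) = (x,y) onto the first layer V₁ ≅ ℝ²ⁿ. -/
def xi1 {n : ℕ} (η : Heis n) : V1 n := (WithLp.equiv 2 (E n × E n)).symm (η.1, η.2.1)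

/-- The horizontal plane through η₀. -/
def Hplane {n : ℕ} (η₀ : Heis n) : Set (Heis n) :=
  {η | η.2.2 = η₀.2.2 + 2 * (⟪η₀.2.1, η.1⟫ - ⟪η₀.1, η.2.1⟫)}

/-- H-monotonicity of a set-valued map T : ℍⁿ ⇉ V₁. -/
def IsHMonotone {n : ℕ} (T : Heis n → Set (V1 n)) : Prop :=
  ∀ η η', η' ∈ Hplane η → ∀ v ∈ T η, ∀ v' ∈ T η', 0 ≤ ⟪v - v', xi1 η - xi1 η'⟫

/-- Maximal H-monotonicity. -/
def IsMaximalHMonotone {n : ℕ} (T : Heis n → Set (V1 n)) : Prop :=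
  IsHMonotone T ∧
    ∀ η v, (∀ η' ∈ Hplane η, ∀ v' ∈ T η', 0 ≤ ⟪v - v', xi1 η - xi1 η'⟫) → v ∈ T η

/-- Heisenberg group law. -/
def hmul {n : ℕ} (η η' : Heis n) : Heis n :=
  (η.1 + η'.1, η.2.1 + η'.2.1,
    η.2.2 + η'.2.2 + 2 * (⟪η'.1, η.2.1⟫ - ⟪η.1, η'.2.1⟫))

/-- Heisenberg group inverse. -/
def hinv {n : ℕ} (η : Heis n) : Heis n := (-η.1, -η.2.1, -η.2.2)

/-- The Korányi gauge N(x,y,t) = ((‖x‖²+‖y‖²)² + t²)^(1/4). -/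
def gaugeN {n : ℕ} (η : Heis n) : ℝ :=
  ((‖η.1‖ ^ 2 + ‖η.2.1‖ ^ 2) ^ 2 + η.2.2 ^ 2) ^ ((1 : ℝ) / 4)

/-- The Korányi–Cygan distance d_H(η,η') = N(η'⁻¹ ∘ η). -/
def dH {n : ℕ} (η η' : Heis n) : ℝ := gaugeN (hmul (hinv η') η)

/-- Upper semicontinuity of a set-valued map T : ℍⁿ ⇉ V₁, w.r.t. the Korányi–Cygan distance. -/
def IsUSC {n : ℕ} (T : Heis n → Set (V1 n)) : Prop :=
  ∀ η : Heis n, ∀ ε > (0 : ℝ), ∃ δ > (0 : ℝ), ∀ η' : Heis n,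
    dH η' η < δ → T η' ⊆ T η + Metric.ball (0 : V1 n) ε

/-- Local boundedness of a set-valued map T : ℍⁿ ⇉ V₁, w.r.t. the Korányi–Cygan distance. -/
def IsLocallyBounded {n : ℕ} (T : Heis n → Set (V1 n)) : Prop :=
  ∀ η₀ : Heis n, ∃ r > (0 : ℝ), ∃ M : ℝ, ∀ η : Heis n, dH η η₀ ≤ r → ∀ v ∈ T η, ‖v‖ ≤ M

/-!
A fixed point `q` leaves the horizontal plane of `p` when `p` moves, so values at `p` and `q` are
compared through one intermediate point `p ∘ (e, 0)`, with `v ∈ S p` and `u ∈ S (p ∘ (e, 0))`: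
monotonicity gives `⟪v, e⟫ ≤ ⟪u, e⟫` and then bounds `u` by a fixed value at `q`. For `q` to lie on
the horizontal plane of `p ∘ (e, 0)` is one linear equation in `e`, and nondegeneracy of the form
lets one solve two such equations with `e` depending continuously on `p`.

Placing `q₁` and `q₂` symmetrically about the direction `a` turns `⟪u, e⟫` into a positive
combination of quantities bounded by values at `q₁` and `q₂`; this bounds `⟪v, d⟫` for some `d`
near `a`, uniformly near `p`, and compactness of the unit sphere gives local boundedness. Choosing
`e` close to half of `q - p` makes the two comparisons add up, in the limit and thanks to local
boundedness at the midpoint, to the monotonicity inequality between `p` and `q`. By maximality the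
graph is closed, and a locally bounded map with closed graph is upper semicontinuous.
-/

open Filter Topology

section SetValuedMaps

lemma upperHemicontinuousAt_of_isClosed_graph {X Y : Type*} [TopologicalSpace X]
    [TopologicalSpace Y] {S : X → Set Y} {x : X} {K : Set Y}
    (hS : IsClosed {z : X × Y | z.2 ∈ S z.1}) (hK : IsCompact K)
    (hSK : ∀ᶠ x' in 𝓝 x, S x' ⊆ K) : UpperHemicontinuousAt S x := by
  refine .of_forall_isOpen fun U hU hSU ↦ ?_
  have avoid : ∀ᶠ x' in 𝓝 x, ∀ y ∈ K \ U, y ∉ S x' :=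
    (hK.diff hU).eventually_forall_of_forall_eventually fun y hy ↦
      hS.isOpen_compl.mem_nhds fun hyS ↦ hy.2 (hSU hyS)
  filter_upwards [hSK, avoid] with x' hK' havoid y hy
  by_contra hyU
  exact havoid y ⟨hK' hy, hyU⟩ hy

lemma exists_eventually_norm_le_of_inner_le {X V : Type*} [NormedAddCommGroup V]
    [InnerProductSpace ℝ V] [FiniteDimensional ℝ V] {l : Filter X} {S : X → Set V}
    (h : ∀ a : V, a ≠ 0 → ∃ d : X → V, ∃ C : ℝ, Tendsto d l (𝓝 a) ∧
      ∀ᶠ x in l, ∀ v ∈ S x, ⟪v, d x⟫ ≤ C) :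
    ∃ M : ℝ, ∀ᶠ x in l, ∀ v ∈ S x, ‖v‖ ≤ M := by
  have near : ∀ a ∈ Metric.sphere (0 : V) 1, ∀ᶠ z in (atTop ×ˢ l) ×ˢ 𝓝 a,
      ∀ r : ℝ, r • z.2 ∈ S z.1.2 → r ≤ z.1.1 := by
    intro a ha
    have ha1 : ‖a‖ = 1 := by simpa using ha
    obtain ⟨d, C, hd, hC⟩ := h a (by rintro rfl; simp at ha1)
    have hinner : Tendsto (fun z : (ℝ × X) × V ↦ ⟪z.2, d z.1.2⟫) ((atTop ×ˢ l) ×ˢ 𝓝 a)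
        (𝓝 ⟪a, a⟫) :=
      tendsto_snd.inner (hd.comp (tendsto_snd.comp tendsto_fst))
    have hhalf := hinner.eventually_const_lt
      (show 1 / 2 < ⟪a, a⟫ by rw [real_inner_self_eq_norm_sq, ha1]; norm_num)
    have hlarge : ∀ᶠ z : (ℝ × X) × V in (atTop ×ˢ l) ×ˢ 𝓝 a, max 0 (2 * C) ≤ z.1.1 :=
      (tendsto_fst.comp tendsto_fst).eventually (eventually_ge_atTop _)
    filter_upwards [hhalf, hlarge, (tendsto_snd.comp tendsto_fst).eventually hC]
      with ⟨⟨M, x⟩, w⟩ (hw : 1 / 2 < ⟪w, d x⟫) hM hCx r hr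
    obtain ⟨hM0, hMC⟩ : 0 ≤ M ∧ 2 * C ≤ M := max_le_iff.1 hM
    have hCr : r * ⟪w, d x⟫ ≤ C := real_inner_smul_left w (d x) r ▸ hCx _ hr
    have hrM : r ≤ M := by
      by_contra! hlt
      nlinarith
    exact hrM
  have tube : ∀ᶠ z in (atTop ×ˢ l) ×ˢ 𝓝ˢ (Metric.sphere (0 : V) 1),
      ∀ r : ℝ, r • z.2 ∈ S z.1.2 → r ≤ z.1.1 :=
    (isCompact_sphere 0 1).mem_prod_nhdsSet_of_forall near
  have uniform : ∀ᶠ y in atTop ×ˢ l, ∀ a ∈ Metric.sphere (0 : V) 1,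
      ∀ r : ℝ, r • a ∈ S y.2 → r ≤ y.1 :=
    tube.curry.mono fun _ hy ↦ hy.self_of_nhdsSet
  obtain ⟨M, hM, hM0⟩ := (uniform.curry.and (eventually_ge_atTop 0)).exists
  refine ⟨M, hM.mono fun x hx v hv ↦ ?_⟩
  rcases eq_or_ne v 0 with rfl | hv0
  · simpa using hM0
  · have hnorm : ‖v‖ ≠ 0 := norm_ne_zero_iff.2 hv0
    exact hx (‖v‖⁻¹ • v) (by simp [norm_smul, hnorm]) ‖v‖ (by rwa [smul_inv_smul₀ hnorm])

end SetValuedMaps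

section HorizontalMonotonicity

variable {V : Type*} [NormedAddCommGroup V] [InnerProductSpace ℝ V]

/-- The horizontal plane through `p` in the Heisenberg group `V × ℝ` of the alternating form `ω`,
whose group law is `(z, t) ∘ (z', t') = (z + z', t + t' + 2 ω z z')`. -/
def horizontalPlane (ω : V →L[ℝ] V →L[ℝ] ℝ) (p : V × ℝ) : Set (V × ℝ) :=
  {q | q.2 = p.2 + 2 * ω p.1 q.1}

/-- The right translate `p ∘ (a, 0)` of `p` by a horizontal vector `a`. -/
def horizontalStep (ω : V →L[ℝ] V →L[ℝ] ℝ) (p : V × ℝ) (a : V) : V × ℝ :=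
  (p.1 + a, p.2 + 2 * ω p.1 a)

/-- Half the height of `q` above the horizontal plane through `p`. -/
def verticalGap (ω : V →L[ℝ] V →L[ℝ] ℝ) (p q : V × ℝ) : ℝ :=
  (q.2 - p.2) / 2 - ω p.1 q.1

/-- H-monotonicity of a set-valued map on the Heisenberg group `V × ℝ` of `ω`. -/
def IsHorizontallyMonotone (ω : V →L[ℝ] V →L[ℝ] ℝ) (S : V × ℝ → Set V) : Prop :=
  ∀ p, ∀ q ∈ horizontalPlane ω p, ∀ v ∈ S p, ∀ w ∈ S q, 0 ≤ ⟪v - w, p.1 - q.1⟫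

/-- Maximal H-monotonicity of a set-valued map on the Heisenberg group `V × ℝ` of `ω`. -/
def IsMaximalHorizontallyMonotone (ω : V →L[ℝ] V →L[ℝ] ℝ) (S : V × ℝ → Set V) : Prop :=
  IsHorizontallyMonotone ω S ∧
    ∀ p v, (∀ q ∈ horizontalPlane ω p, ∀ w ∈ S q, 0 ≤ ⟪v - w, p.1 - q.1⟫) → v ∈ S p

variable {ω : V →L[ℝ] V →L[ℝ] ℝ} {S : V × ℝ → Set V}

lemma horizontalStep_mem_horizontalPlane (hω : ω.toBilinForm.IsAlt) (p : V × ℝ) (a : V) :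
    horizontalStep ω p a ∈ horizontalPlane ω p := by
  have hself : ω p.1 p.1 = 0 := hω p.1
  simp [horizontalPlane, horizontalStep, hself]

lemma mem_horizontalPlane_horizontalStep_iff (hω : ω.toBilinForm.IsAlt) {p q : V × ℝ} {a : V} :
    q ∈ horizontalPlane ω (horizontalStep ω p a) ↔ ω a (q.1 - p.1) = verticalGap ω p q := by
  have hskew : -ω a p.1 = ω p.1 a := hω.neg_eq a p.1
  simp only [horizontalPlane, horizontalStep, verticalGap, Set.mem_ofPred_eq, map_add, map_sub,
    add_apply]
  constructor <;> intro h <;> linarith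

/-- Each membership is one linear equation in `a`, so this is Cramer's rule. -/
lemma mem_horizontalPlane_horizontalStep_smul_add_smul_iff (hω : ω.toBilinForm.IsAlt)
    {p q₁ q₂ : V × ℝ} (hne : ω (q₁.1 - p.1) (q₂.1 - p.1) ≠ 0) {c₁ c₂ : ℝ} {a : V}
    (ha : a = c₁ • (q₁.1 - p.1) + c₂ • (q₂.1 - p.1)) :
    (q₁ ∈ horizontalPlane ω (horizontalStep ω p a) ∧
      q₂ ∈ horizontalPlane ω (horizontalStep ω p a)) ↔
    c₁ = verticalGap ω p q₂ / ω (q₁.1 - p.1) (q₂.1 - p.1) ∧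
      c₂ = -verticalGap ω p q₁ / ω (q₁.1 - p.1) (q₂.1 - p.1) := by
  have hself (z : V) : ω z z = 0 := hω z
  have hskew : ω (q₂.1 - p.1) (q₁.1 - p.1) = -ω (q₁.1 - p.1) (q₂.1 - p.1) :=
    (hω.neg_eq _ _).symm
  rw [mem_horizontalPlane_horizontalStep_iff hω, mem_horizontalPlane_horizontalStep_iff hω,
    eq_div_iff hne, eq_div_iff hne, ha]
  generalize q₁.1 - p.1 = d₁ at *
  generalize q₂.1 - p.1 = d₂ at *
  simp only [map_add, map_smul, add_apply, smul_apply,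
    smul_eq_mul, hself, hskew]
  constructor <;> rintro ⟨h₁, h₂⟩ <;> constructor <;> linarith

lemma exists_continuousAt_mem_horizontalPlane_horizontalStep (hω : ω.toBilinForm.IsAlt)
    {p q₁ q₂ : V × ℝ} (hne : ω (q₁.1 - p.1) (q₂.1 - p.1) ≠ 0) {x₁ x₂ : ℝ} {a : V}
    (ha : a = x₁ • (q₁.1 - p.1) + x₂ • (q₂.1 - p.1))
    (h₁ : q₁ ∈ horizontalPlane ω (horizontalStep ω p a))
    (h₂ : q₂ ∈ horizontalPlane ω (horizontalStep ω p a)) :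
    ∃ c₁ c₂ : V × ℝ → ℝ, ContinuousAt c₁ p ∧ ContinuousAt c₂ p ∧ c₁ p = x₁ ∧ c₂ p = x₂ ∧
      ∀ᶠ r in 𝓝 p, ∀ b, b = c₁ r • (q₁.1 - r.1) + c₂ r • (q₂.1 - r.1) →
        q₁ ∈ horizontalPlane ω (horizontalStep ω r b) ∧
        q₂ ∈ horizontalPlane ω (horizontalStep ω r b) := by
  obtain ⟨hx₁, hx₂⟩ :=
    (mem_horizontalPlane_horizontalStep_smul_add_smul_iff hω hne ha).1 ⟨h₁, h₂⟩
  have hdet : ContinuousAt (fun r : V × ℝ ↦ ω (q₁.1 - r.1) (q₂.1 - r.1)) p := by fun_prop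
  have hgap (q : V × ℝ) : ContinuousAt (verticalGap ω · q) p := by
    unfold verticalGap; fun_prop
  refine ⟨_, _, (hgap q₂).div hdet hne, (hgap q₁).neg.div hdet hne, hx₁.symm, hx₂.symm, ?_⟩
  filter_upwards [hdet.eventually_ne hne] with r hr b hb
  exact (mem_horizontalPlane_horizontalStep_smul_add_smul_iff hω hr hb).2 ⟨rfl, rfl⟩

namespace IsHorizontallyMonotone

lemma inner_le (hS : IsHorizontallyMonotone ω S) {p q : V × ℝ} (hq : q ∈ horizontalPlane ω p)
    {v w : V} (hv : v ∈ S p) (hw : w ∈ S q) : ⟪v, q.1 - p.1⟫ ≤ ⟪w, q.1 - p.1⟫ := by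
  have h := hS p q hq v hv w hw
  rwa [← neg_sub q.1, inner_neg_right, inner_sub_left, neg_sub, sub_nonneg] at h

lemma inner_le_of_mem_horizontalStep (hω : ω.toBilinForm.IsAlt)
    (hS : IsHorizontallyMonotone ω S) {p : V × ℝ} {a v u : V} (hv : v ∈ S p)
    (hu : u ∈ S (horizontalStep ω p a)) : ⟪v, a⟫ ≤ ⟪u, a⟫ := by
  simpa [horizontalStep] using hS.inner_le (horizontalStep_mem_horizontalPlane hω p a) hv hu

lemma inner_sub_le_of_mem_horizontalStep (hS : IsHorizontallyMonotone ω S) {p q : V × ℝ}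
    {a u w : V} (hq : q ∈ horizontalPlane ω (horizontalStep ω p a))
    (hu : u ∈ S (horizontalStep ω p a)) (hw : w ∈ S q) :
    ⟪u, q.1 - p.1 - a⟫ ≤ ⟪w, q.1 - p.1 - a⟫ := by
  simpa only [horizontalStep, sub_add_eq_sub_sub] using hS.inner_le hq hu hw

lemma inner_smul_le (hω : ω.toBilinForm.IsAlt) (hS : IsHorizontallyMonotone ω S)
    {p q₁ q₂ : V × ℝ} {c₁ c₂ : ℝ} (hc₁ : 0 ≤ c₁) (hc₂ : 0 ≤ c₂) (hc : c₁ + c₂ ≤ 1)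
    {a v u w₁ w₂ : V} (ha : a = c₁ • (q₁.1 - p.1) + c₂ • (q₂.1 - p.1))
    (hq₁ : q₁ ∈ horizontalPlane ω (horizontalStep ω p a))
    (hq₂ : q₂ ∈ horizontalPlane ω (horizontalStep ω p a))
    (hv : v ∈ S p) (hu : u ∈ S (horizontalStep ω p a)) (hw₁ : w₁ ∈ S q₁) (hw₂ : w₂ ∈ S q₂) :
    ⟪v, (1 - c₁ - c₂) • a⟫ ≤ c₁ * ⟪w₁, q₁.1 - p.1 - a⟫ + c₂ * ⟪w₂, q₂.1 - p.1 - a⟫ := by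
  have hcomb : (1 - c₁ - c₂) • a = c₁ • (q₁.1 - p.1 - a) + c₂ • (q₂.1 - p.1 - a) := by
    rw [smul_sub c₁ _ a, smul_sub c₂ _ a, sub_add_sub_comm, ← ha]
    module
  calc ⟪v, (1 - c₁ - c₂) • a⟫ = (1 - c₁ - c₂) * ⟪v, a⟫ := real_inner_smul_right ..
    _ ≤ (1 - c₁ - c₂) * ⟪u, a⟫ :=
      mul_le_mul_of_nonneg_left (hS.inner_le_of_mem_horizontalStep hω hv hu) (by linarith)
    _ = c₁ * ⟪u, q₁.1 - p.1 - a⟫ + c₂ * ⟪u, q₂.1 - p.1 - a⟫ := by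
      rw [← real_inner_smul_right, hcomb, inner_add_right, real_inner_smul_right,
        real_inner_smul_right]
    _ ≤ c₁ * ⟪w₁, q₁.1 - p.1 - a⟫ + c₂ * ⟪w₂, q₂.1 - p.1 - a⟫ := by
      gcongr
      · exact hS.inner_sub_le_of_mem_horizontalStep hq₁ hu hw₁
      · exact hS.inner_sub_le_of_mem_horizontalStep hq₂ hu hw₂

lemma inner_le_add_of_norm_le (hω : ω.toBilinForm.IsAlt) (hS : IsHorizontallyMonotone ω S)
    {p q : V × ℝ} {a v u w : V} (hq : q ∈ horizontalPlane ω (horizontalStep ω p a))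
    (hv : v ∈ S p) (hu : u ∈ S (horizontalStep ω p a)) (hw : w ∈ S q)
    {M : ℝ} (hM : ‖u‖ ≤ M) :
    ⟪v, a⟫ ≤ ⟪w, q.1 - p.1 - a⟫ + M * ‖a - (q.1 - p.1 - a)‖ :=
  calc ⟪v, a⟫ ≤ ⟪u, a⟫ := hS.inner_le_of_mem_horizontalStep hω hv hu
    _ = ⟪u, q.1 - p.1 - a⟫ + ⟪u, a - (q.1 - p.1 - a)⟫ := by
      rw [← inner_add_right, add_sub_cancel]
    _ ≤ ⟪w, q.1 - p.1 - a⟫ + M * ‖a - (q.1 - p.1 - a)‖ := by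
      gcongr
      · exact hS.inner_sub_le_of_mem_horizontalStep hq hu hw
      · exact (real_inner_le_norm _ _).trans (by gcongr)

lemma exists_tendsto_smul_eventually_inner_le (hω : ω.toBilinForm.IsAlt)
    (hS : IsHorizontallyMonotone ω S) (hdom : ∀ p, (S p).Nonempty) {p q₁ q₂ : V × ℝ}
    (hne : ω (q₁.1 - p.1) (q₂.1 - p.1) ≠ 0) {x₁ x₂ : ℝ} (hx₁ : 0 < x₁) (hx₂ : 0 < x₂)
    (hx : x₁ + x₂ < 1) {a : V} (ha : a = x₁ • (q₁.1 - p.1) + x₂ • (q₂.1 - p.1))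
    (hq₁ : q₁ ∈ horizontalPlane ω (horizontalStep ω p a))
    (hq₂ : q₂ ∈ horizontalPlane ω (horizontalStep ω p a)) :
    ∃ d : V × ℝ → V, ∃ C : ℝ, Tendsto d (𝓝 p) (𝓝 ((1 - x₁ - x₂) • a)) ∧
      ∀ᶠ r in 𝓝 p, ∀ v ∈ S r, ⟪v, d r⟫ ≤ C := by
  obtain ⟨c₁, c₂, hc₁, hc₂, rfl, rfl, hmem⟩ :=
    exists_continuousAt_mem_horizontalPlane_horizontalStep hω hne ha hq₁ hq₂
  obtain ⟨w₁, hw₁⟩ := hdom q₁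
  obtain ⟨w₂, hw₂⟩ := hdom q₂
  set e : V × ℝ → V := fun r ↦ c₁ r • (q₁.1 - r.1) + c₂ r • (q₂.1 - r.1)
  have hec : ContinuousAt e p := by fun_prop
  set β : V × ℝ → ℝ := fun r ↦
    c₁ r * ⟪w₁, q₁.1 - r.1 - e r⟫ + c₂ r * ⟪w₂, q₂.1 - r.1 - e r⟫
  have hβc : ContinuousAt β p := by fun_prop
  refine ⟨fun r ↦ (1 - c₁ r - c₂ r) • e r, β p + 1, ?_, ?_⟩
  · rw [ha]
    exact ContinuousAt.tendsto (f := fun r ↦ (1 - c₁ r - c₂ r) • e r) (by fun_prop)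
  · filter_upwards [hmem, hβc.eventually_lt_const (lt_add_one _), hc₁.eventually_const_lt hx₁,
      hc₂.eventually_const_lt hx₂, (hc₁.add hc₂).eventually_lt_const hx]
      with r hr hβr hr₁ hr₂ hr₁₂ v hv
    obtain ⟨u, hu⟩ := hdom (horizontalStep ω r (e r))
    obtain ⟨hrq₁, hrq₂⟩ := hr (e r) rfl
    exact (hS.inner_smul_le hω hr₁.le hr₂.le hr₁₂.le rfl hrq₁ hrq₂ hv hu hw₁ hw₂).trans hβr.le

lemma exists_tendsto_eventually_inner_le (hω : ω.toBilinForm.IsAlt)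
    (hnd : ω.toBilinForm.SeparatingLeft) (hS : IsHorizontallyMonotone ω S)
    (hdom : ∀ p, (S p).Nonempty) (p : V × ℝ) {a : V} (ha : a ≠ 0) :
    ∃ d : V × ℝ → V, ∃ C : ℝ, Tendsto d (𝓝 p) (𝓝 a) ∧
      ∀ᶠ r in 𝓝 p, ∀ v ∈ S r, ⟪v, d r⟫ ≤ C := by
  obtain ⟨b, hb⟩ : ∃ b, ω a b ≠ 0 := by
    contrapose! ha
    exact hnd a ha
  -- Seen from `p ∘ (2a, 0)`, the horizontal vectors towards `q₁` and `q₂` have `2a` as midpoint.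
  set q₁ := horizontalStep ω (horizontalStep ω p ((2 : ℝ) • a)) ((2 : ℝ) • a + b) with hq₁
  set q₂ := horizontalStep ω (horizontalStep ω p ((2 : ℝ) • a)) ((2 : ℝ) • a - b) with hq₂
  have hd₁ : q₁.1 - p.1 = (4 : ℝ) • a + b := by simp only [hq₁, horizontalStep]; module
  have hd₂ : q₂.1 - p.1 = (4 : ℝ) • a - b := by simp only [hq₂, horizontalStep]; module
  have hdet : ω (q₁.1 - p.1) (q₂.1 - p.1) = -8 * ω a b := by
    have hself (z : V) : ω z z = 0 := hω z
    have hskew : ω b a = -ω a b := (hω.neg_eq a b).symm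
    simp only [hd₁, hd₂, map_add, map_sub, map_smul, add_apply, smul_apply, smul_eq_mul, hself,
      hskew]
    ring
  have hne : ω (q₁.1 - p.1) (q₂.1 - p.1) ≠ 0 := by
    rw [hdet]
    exact mul_ne_zero (by norm_num) hb
  obtain ⟨d, C, hd, hC⟩ :=
    hS.exists_tendsto_smul_eventually_inner_le hω hdom hne (x₁ := 1 / 4) (x₂ := 1 / 4)
      (a := (2 : ℝ) • a) (by norm_num) (by norm_num) (by norm_num) (by rw [hd₁, hd₂]; module)
      (horizontalStep_mem_horizontalPlane hω _ _) (horizontalStep_mem_horizontalPlane hω _ _)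
  have hlim : (1 - 1 / 4 - 1 / 4 : ℝ) • (2 : ℝ) • a = a := by module
  exact ⟨d, C, hlim ▸ hd, hC⟩

theorem exists_eventually_norm_le [FiniteDimensional ℝ V] (hω : ω.toBilinForm.IsAlt)
    (hnd : ω.toBilinForm.SeparatingLeft) (hS : IsHorizontallyMonotone ω S)
    (hdom : ∀ p, (S p).Nonempty) (p : V × ℝ) :
    ∃ M : ℝ, ∀ᶠ r in 𝓝 p, ∀ v ∈ S r, ‖v‖ ≤ M :=
  exists_eventually_norm_le_of_inner_le fun _ ha ↦
    hS.exists_tendsto_eventually_inner_le hω hnd hdom p ha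

end IsHorizontallyMonotone

lemma exists_continuousAt_midpoint_step (hω : ω.toBilinForm.IsAlt)
    (hnd : ω.toBilinForm.SeparatingLeft) {p q : V × ℝ} (hq : q ∈ horizontalPlane ω p)
    (hpq : q.1 ≠ p.1) :
    ∃ e : V × ℝ → V, ContinuousAt e p ∧ e p = (1 / 2 : ℝ) • (q.1 - p.1) ∧
      ∀ᶠ r in 𝓝 p, q ∈ horizontalPlane ω (horizontalStep ω r (e r)) := by
  obtain ⟨b, hb⟩ : ∃ b, ω (q.1 - p.1) b ≠ 0 := by
    by_contra! h
    exact hpq (sub_eq_zero.1 (hnd _ h))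
  have hself (z : V) : ω z z = 0 := hω z
  set m := horizontalStep ω p ((1 / 2 : ℝ) • (q.1 - p.1)) with hm
  have hqm : q ∈ horizontalPlane ω m := by
    rw [hm, mem_horizontalPlane_horizontalStep_iff hω, map_smul, smul_apply,
      hself, smul_zero, verticalGap, show q.2 = p.2 + 2 * ω p.1 q.1 from hq]
    ring
  have hne : ω (q.1 - p.1) ((horizontalStep ω m b).1 - p.1) ≠ 0 := by
    have hstep : (horizontalStep ω m b).1 - p.1 = (1 / 2 : ℝ) • (q.1 - p.1) + b := by
      simp only [hm, horizontalStep]; abel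
    rwa [hstep, map_add, map_smul, hself, smul_zero, zero_add]
  obtain ⟨c₁, c₂, hc₁, hc₂, hc₁p, hc₂p, hmem⟩ :=
    exists_continuousAt_mem_horizontalPlane_horizontalStep hω hne (x₁ := 1 / 2) (x₂ := 0)
      (by simp) hqm (horizontalStep_mem_horizontalPlane hω m b)
  refine ⟨fun r ↦ c₁ r • (q.1 - r.1) + c₂ r • ((horizontalStep ω m b).1 - r.1), by fun_prop,
    by simp [hc₁p, hc₂p], hmem.mono fun r hr ↦ (hr _ rfl).1⟩

namespace IsMaximalHorizontallyMonotone

variable [FiniteDimensional ℝ V]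

theorem isClosed_graph (hω : ω.toBilinForm.IsAlt) (hnd : ω.toBilinForm.SeparatingLeft)
    (hS : IsMaximalHorizontallyMonotone ω S) (hdom : ∀ p, (S p).Nonempty) :
    IsClosed {z : (V × ℝ) × V | z.2 ∈ S z.1} := by
  refine isClosed_iff_forall_filter.2 fun ⟨p, v⟩ F _ hF hFz ↦ hS.2 p v fun q hq w hw ↦ ?_
  rcases eq_or_ne q.1 p.1 with hpq | hpq
  · simp [hpq]
  obtain ⟨e, hec, hep, hmem⟩ := exists_continuousAt_midpoint_step hω hnd hq hpq
  have hstep : ContinuousAt (fun r ↦ horizontalStep ω r (e r)) p := by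
    unfold horizontalStep; fun_prop
  obtain ⟨M, hM⟩ := hS.1.exists_eventually_norm_le hω hnd hdom (horizontalStep ω p (e p))
  have hfst : Tendsto Prod.fst F (𝓝 p) := continuousAt_fst.mono_left hFz
  have hbound : ∀ᶠ z in F, ⟪z.2, e z.1⟫ ≤
      ⟪w, q.1 - z.1.1 - e z.1⟫ + M * ‖e z.1 - (q.1 - z.1.1 - e z.1)‖ := by
    filter_upwards [le_principal_iff.1 hF, hfst.eventually hmem,
      hfst.eventually (hstep.eventually hM)] with z hz hqz hMz
    obtain ⟨u, hu⟩ := hdom (horizontalStep ω z.1 (e z.1))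
    exact hS.1.inner_le_add_of_norm_le hω hqz hz hu hw (hMz u hu)
  have hleft : Tendsto (fun z : (V × ℝ) × V ↦ ⟪z.2, e z.1⟫) F (𝓝 ⟪v, e p⟫) :=
    (continuousAt_snd.mono_left hFz).inner (hec.tendsto.comp hfst)
  have hright : ContinuousAt
      (fun r : V × ℝ ↦ ⟪w, q.1 - r.1 - e r⟫ + M * ‖e r - (q.1 - r.1 - e r)‖) p := by fun_prop
  have hhalf : q.1 - p.1 - e p = e p := by rw [hep]; module
  have hlim := le_of_tendsto_of_tendsto hleft (hright.tendsto.comp hfst) hbound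
  rw [hhalf, sub_self, norm_zero, mul_zero, add_zero, hep, real_inner_smul_right,
    real_inner_smul_right] at hlim
  rw [← neg_sub q.1, inner_neg_right, inner_sub_left]
  linarith

theorem upperHemicontinuous (hω : ω.toBilinForm.IsAlt) (hnd : ω.toBilinForm.SeparatingLeft)
    (hS : IsMaximalHorizontallyMonotone ω S) (hdom : ∀ p, (S p).Nonempty) :
    UpperHemicontinuous S := by
  refine upperHemicontinuous_iff.2 fun p ↦ ?_
  obtain ⟨M, hM⟩ := hS.1.exists_eventually_norm_le hω hnd hdom p
  exact upperHemicontinuousAt_of_isClosed_graph (hS.isClosed_graph hω hnd hdom)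
    (isCompact_closedBall 0 M) (hM.mono fun r hr v hv ↦ mem_closedBall_zero_iff.2 (hr v hv))

end IsMaximalHorizontallyMonotone

theorem maximal_HMonotone_locallyBounded_and_usc_general [FiniteDimensional ℝ V]
    (hω : ω.toBilinForm.IsAlt) (hnd : ω.toBilinForm.SeparatingLeft)
    (hS : IsMaximalHorizontallyMonotone ω S) (hdom : ∀ p, (S p).Nonempty) :
    (∀ p, ∃ M : ℝ, ∀ᶠ r in 𝓝 p, ∀ v ∈ S r, ‖v‖ ≤ M) ∧ UpperHemicontinuous S :=
  ⟨hS.1.exists_eventually_norm_le hω hnd hdom, hS.upperHemicontinuous hω hnd hdom⟩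

end HorizontalMonotonicity

section KoranyiCygan

variable {n : ℕ}

lemma hmul_hinv_cancel_left (η η' : Heis n) : hmul η (hmul (hinv η) η') = η' := by
  refine Prod.ext (add_neg_cancel_left _ _) (Prod.ext (add_neg_cancel_left _ _) ?_)
  simp only [hmul, hinv, inner_add_left, inner_add_right, inner_neg_left, inner_neg_right]
  ring

lemma continuous_hmul_left (η : Heis n) : Continuous (hmul η) := by
  unfold hmul; fun_prop

lemma gaugeN_nonneg (ζ : Heis n) : 0 ≤ gaugeN ζ :=
  Real.rpow_nonneg (by positivity) _

lemma gaugeN_pow_four (ζ : Heis n) :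
    gaugeN ζ ^ 4 = (‖ζ.1‖ ^ 2 + ‖ζ.2.1‖ ^ 2) ^ 2 + ζ.2.2 ^ 2 := by
  rw [gaugeN, one_div]
  exact Real.rpow_inv_natCast_pow (by positivity) four_ne_zero

lemma norm_le_gaugeN {ζ : Heis n} (hζ : gaugeN ζ ≤ 1) : ‖ζ‖ ≤ gaugeN ζ := by
  have hN := gaugeN_nonneg ζ
  have hN4 := gaugeN_pow_four ζ
  have hxy : ‖ζ.1‖ ^ 2 + ‖ζ.2.1‖ ^ 2 ≤ gaugeN ζ ^ 2 :=
    le_of_sq_le_sq (by nlinarith [sq_nonneg ζ.2.2]) (by positivity)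
  have hx : ‖ζ.1‖ ≤ gaugeN ζ := le_of_sq_le_sq (by nlinarith [sq_nonneg ‖ζ.2.1‖]) hN
  have hy : ‖ζ.2.1‖ ≤ gaugeN ζ := le_of_sq_le_sq (by nlinarith [sq_nonneg ‖ζ.1‖]) hN
  have ht : |ζ.2.2| ≤ gaugeN ζ ^ 2 :=
    abs_le_of_sq_le_sq (by nlinarith [sq_nonneg (‖ζ.1‖ ^ 2 + ‖ζ.2.1‖ ^ 2)]) (by positivity)
  exact max_le hx (max_le hy (ht.trans (pow_le_of_le_one hN hζ two_ne_zero)))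

lemma exists_forall_dH_le_of_eventually {η₀ : Heis n} {P : Heis n → Prop}
    (hP : ∀ᶠ η in 𝓝 η₀, P η) : ∃ r > (0 : ℝ), ∀ η, dH η η₀ ≤ r → P η := by
  have htend : Tendsto (hmul η₀) (𝓝 0) (𝓝 η₀) := by
    simpa [hmul] using (continuous_hmul_left η₀).tendsto 0
  obtain ⟨r, hr, hball⟩ :=
    Metric.nhds_basis_closedBall.eventually_iff.1 (htend.eventually hP)
  refine ⟨min r 1, by positivity, fun η hη ↦ ?_⟩
  obtain ⟨hηr, hη1⟩ := le_min_iff.1 hη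
  rw [← hmul_hinv_cancel_left η₀ η]
  exact hball (mem_closedBall_zero_iff.2 ((norm_le_gaugeN hη1).trans hηr))

end KoranyiCygan

section HeisenbergModel

variable {n : ℕ}

/-- The standard symplectic form `((x, y), (x', y')) ↦ ⟪y, x'⟫ - ⟪x, y'⟫` on `V₁`. -/
def symplecticForm (n : ℕ) : V1 n →L[ℝ] V1 n →L[ℝ] ℝ :=
  (innerSL ℝ).bilinearComp (WithLp.sndL 2 ℝ (E n) (E n)) (WithLp.fstL 2 ℝ (E n) (E n)) -
    (innerSL ℝ).bilinearComp (WithLp.fstL 2 ℝ (E n) (E n)) (WithLp.sndL 2 ℝ (E n) (E n))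

lemma symplecticForm_apply (z w : V1 n) :
    symplecticForm n z w = ⟪z.snd, w.fst⟫ - ⟪z.fst, w.snd⟫ := rfl

lemma symplecticForm_isAlt : (symplecticForm n).toBilinForm.IsAlt := fun z ↦ by
  rw [ContinuousLinearMap.toBilinForm_apply, symplecticForm_apply, real_inner_comm, sub_self]

lemma symplecticForm_separatingLeft : (symplecticForm n).toBilinForm.SeparatingLeft := by
  intro z hz
  have hsnd : z.snd = 0 := by
    simpa [symplecticForm_apply] using hz (WithLp.toLp 2 (z.snd, 0))
  have hfst : z.fst = 0 := by
    simpa [symplecticForm_apply] using hz (WithLp.toLp 2 (0, z.fst))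
  exact WithLp.ofLp_injective 2 (Prod.ext hfst hsnd)

/-- The identification `(x, y, t) ↦ ((x, y), t)` of `ℍⁿ` with `V₁ × ℝ`. -/
def heisHomeomorph (n : ℕ) : Heis n ≃ₜ V1 n × ℝ :=
  (Homeomorph.prodAssoc (E n) (E n) ℝ).symm.trans
    ((WithLp.homeomorphProd 2 (E n) (E n)).symm.prodCongr (Homeomorph.refl ℝ))

lemma heisHomeomorph_mem_horizontalPlane_iff {η η' : Heis n} :
    heisHomeomorph n η' ∈ horizontalPlane (symplecticForm n) (heisHomeomorph n η) ↔
      η' ∈ Hplane η := Iff.rfl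

lemma IsHMonotone.comp_heisHomeomorph_symm {T : Heis n → Set (V1 n)} (hT : IsHMonotone T) :
    IsHorizontallyMonotone (symplecticForm n) (T ∘ (heisHomeomorph n).symm) :=
  fun p q hq ↦ hT ((heisHomeomorph n).symm p) ((heisHomeomorph n).symm q)
    (heisHomeomorph_mem_horizontalPlane_iff.1 hq)

lemma IsMaximalHMonotone.comp_heisHomeomorph_symm {T : Heis n → Set (V1 n)}
    (hT : IsMaximalHMonotone T) :
    IsMaximalHorizontallyMonotone (symplecticForm n) (T ∘ (heisHomeomorph n).symm) :=
  ⟨hT.1.comp_heisHomeomorph_symm, fun p v h ↦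
    hT.2 ((heisHomeomorph n).symm p) v fun η hη ↦
      h (heisHomeomorph n η) (heisHomeomorph_mem_horizontalPlane_iff.2 hη)⟩

lemma isLocallyBounded_of_eventually_norm_le {T : Heis n → Set (V1 n)}
    (hT : ∀ p, ∃ M : ℝ, ∀ᶠ r in 𝓝 p, ∀ v ∈ (T ∘ (heisHomeomorph n).symm) r, ‖v‖ ≤ M) :
    IsLocallyBounded T := fun η₀ ↦ by
  obtain ⟨M, hM⟩ := hT (heisHomeomorph n η₀)
  obtain ⟨r, hr, hrM⟩ :=
    exists_forall_dH_le_of_eventually ((heisHomeomorph n).continuous.continuousAt.eventually hM)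
  exact ⟨r, hr, M, hrM⟩

lemma isUSC_of_upperHemicontinuous {T : Heis n → Set (V1 n)}
    (hT : UpperHemicontinuous (T ∘ (heisHomeomorph n).symm)) : IsUSC T := fun η₀ ε hε ↦ by
  have hnear := hT.forall_isOpen (heisHomeomorph n η₀) (T η₀ + Metric.ball 0 ε)
    Metric.isOpen_ball.add_left
    (Set.subset_add_left _ (Metric.mem_ball_self hε))
  obtain ⟨r, hr, hsub⟩ := exists_forall_dH_le_of_eventually
    ((heisHomeomorph n).continuous.continuousAt.eventually hnear)
  exact ⟨r, hr, fun η hη ↦ hsub η hη.le⟩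

end HeisenbergModel

/-- Corollary 3.2: a maximal H-monotone map with full domain is locally bounded and usc. -/
theorem maximal_HMonotone_locallyBounded_and_usc {n : ℕ} (hn : 1 ≤ n)
    (T : Heis n → Set (V1 n)) (hT : IsMaximalHMonotone T)
    (hdom : ∀ η, (T η).Nonempty) :
    IsLocallyBounded T ∧ IsUSC T := by
  obtain ⟨hbdd, husc⟩ := maximal_HMonotone_locallyBounded_and_usc_general symplecticForm_isAlt
    symplecticForm_separatingLeft hT.comp_heisHomeomorph_symm fun _ ↦ hdom _
  exact ⟨isLocallyBounded_of_eventually_norm_le hbdd, isUSC_of_upperHemicontinuous husc⟩
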